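/- Consider an N-player robust matrix game with policy-dependent uncertainty sets {ℛ_i(π)} satisfying: each ℛ_i(π) ⊆ ℝ^𝒜 is nonempty, closed and convex; (i) there exists L ∈ ℝ such that Σ_a p_π(a)(r*_i(a)+x(a)) ≥ L for every π ∈ Π and x ∈ ℛ_i(π); (ii) for each i and each fixed π_{-i}, the map π_i ↦ σ_{ℛ_i(π)}(−π_iπ_{-i}ᵀ) is convex on Δ(𝒜_i), and π ↦ σ_{ℛ_i(π)}(−π_iπ_{-i}ᵀ) is continuous at every point of the boundary of Π; (iii) π ↦ ℛ_i(π) is continuous in the ℓ∞-Hausdorff distance at every π in the interior of Π, with sup_{x∈ℛ_i(π)}‖x‖_∞ < ∞ there. Define the best-response correspondence φ(π) = { z ∈ Π : z_i ∈ argmax_{u∈Δ(𝒜_i)} F_i(u, π_{-i}) for all i }, where F_i(π) = inf_{x∈ℛ_i(π)} Σ_a p_π(a)(r*_i(a)+x(a)). Then φ(π) is nonempty and convex for every π ∈ Π, and φ has closed graph: if π^n → π, z^n → z and z^n ∈ φ(π^n) for all n, then z ∈ φ(π). -/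

import Mathlib

/-!
The robust value splits as `F_i(π) = ∑ a, p_π(a) r*_i(a) - σ_{ℛ_i(π)}(-π_i π_{-i}ᵀ)`
(`robustValue_eq`): the uniform payoff lower bound makes the supremum finite. The first term is
continuous in `π` and affine in `π_i`, so everything reduces to the support value.

The support value is continuous on all of `Π`: at boundary points this is assumed, and at fully
mixed policies it follows from Hausdorff continuity and boundedness of the uncertainty sets
(`continuousWithinAt_suppAt_interior`). Since fully mixed policies form a neighbourhood of each of
them, all nearby uncertainty sets are bounded too and the Hausdorff distance is finite, so points
of one set can be matched with nearby points of the other.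

Hence `F_i` is continuous on `Π` and concave in `π_i`. Continuity on the compact simplex gives a
maximizer, concavity gives convexity of the set of maximizers, and passing to the limit in the
inequalities defining a best response gives the closed graph.
-/

open scoped BigOperators

/-- The probability simplex `Δ(T)` over a finite set `T`. -/
def probSimplex (T : Type*) [Fintype T] : Set (T → ℝ) :=
  {x | (∀ t, 0 ≤ x t) ∧ ∑ t, x t = 1}

/-- `p_π(a) = ∏_j π_j(a_j)`, the probability of joint action `a` under the
product joint policy `π`. -/
noncomputable def jointProb {N : ℕ} {A : Fin N → Type*} [∀ i, Fintype (A i)]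
    (π : (j : Fin N) → A j → ℝ) (a : (j : Fin N) → A j) : ℝ :=
  ∏ j, π j (a j)

/-- Player `i`'s robust value
`V_i(π) = inf_{x ∈ ℛ_i(π)} Σ_a p_π(a) (r*_i(a) + x(a))`. -/
noncomputable def robustValue {N : ℕ} {A : Fin N → Type*} [∀ i, Fintype (A i)]
    (rstar : (i : Fin N) → ((j : Fin N) → A j) → ℝ)
    (R : (i : Fin N) → ((j : Fin N) → A j → ℝ) → Set (((j : Fin N) → A j) → ℝ))
    (i : Fin N) (π : (j : Fin N) → A j → ℝ) : ℝ :=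
  sInf {t : ℝ | ∃ x ∈ R i π,
    t = ∑ a : ((j : Fin N) → A j), jointProb π a * (rstar i a + x a)}

/-- The support function of `ℛ_i(π)` evaluated at `−π_i π_{-i}ᵀ`:
`σ_{ℛ_i(π)}(−π_i π_{-i}ᵀ) = sup_{x ∈ ℛ_i(π)} ⟨x, −π_i π_{-i}ᵀ⟩
  = sup_{x ∈ ℛ_i(π)} (−Σ_a p_π(a) x(a))`. -/
noncomputable def suppAt {N : ℕ} {A : Fin N → Type*} [∀ i, Fintype (A i)]
    (R : (i : Fin N) → ((j : Fin N) → A j → ℝ) → Set (((j : Fin N) → A j) → ℝ))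
    (i : Fin N) (π : (j : Fin N) → A j → ℝ) : ℝ :=
  sSup {t : ℝ | ∃ x ∈ R i π,
    t = -∑ a : ((j : Fin N) → A j), jointProb π a * x a}


/-- The best-response correspondence
`φ(π) = {z ∈ Π : z_i ∈ argmax_{u ∈ Δ(𝒜_i)} F_i(u, π_{-i}) for all i}`,
where `F_i` is the robust value function. -/
def bestResponse {N : ℕ} {A : Fin N → Type*} [∀ i, Fintype (A i)]
    (rstar : (i : Fin N) → ((j : Fin N) → A j) → ℝ)
    (R : (i : Fin N) → ((j : Fin N) → A j → ℝ) → Set (((j : Fin N) → A j) → ℝ))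
    (π : (j : Fin N) → A j → ℝ) : Set ((j : Fin N) → A j → ℝ) :=
  {z | (∀ j, z j ∈ probSimplex (A j)) ∧
    ∀ i, ∀ u ∈ probSimplex (A i),
      robustValue rstar R i (Function.update π i u)
        ≤ robustValue rstar R i (Function.update π i (z i))}

section Helpers

open Filter Topology

variable {N : ℕ} {A : Fin N → Type*} [∀ i, Fintype (A i)]

/-- The set `Π` of joint policies, as a product of simplices. -/
def policySet (A : Fin N → Type*) [∀ i, Fintype (A i)] : Set ((j : Fin N) → A j → ℝ) :=
  {π | ∀ j, π j ∈ probSimplex (A j)}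

lemma isCompact_probSimplex (T : Type*) [Fintype T] : IsCompact (probSimplex T) :=
  isCompact_stdSimplex ℝ T

lemma convex_probSimplex (T : Type*) [Fintype T] : Convex ℝ (probSimplex T) :=
  convex_stdSimplex ℝ T

lemma isClosed_policySet : IsClosed (policySet A) := by
  simp only [policySet, Set.ofPred_forall]
  exact isClosed_iInter fun j =>
    (isCompact_probSimplex (A j)).isClosed.preimage (continuous_apply j)

lemma update_mem_policySet {π : (j : Fin N) → A j → ℝ} (hπ : π ∈ policySet A) {i : Fin N}
    {u : A i → ℝ} (hu : u ∈ probSimplex (A i)) : Function.update π i u ∈ policySet A := by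
  intro j
  rcases eq_or_ne j i with rfl | h
  · simpa using hu
  · simpa [h] using hπ j

lemma continuous_jointProb (a : (j : Fin N) → A j) :
    Continuous fun π : (j : Fin N) → A j → ℝ => jointProb π a := by
  unfold jointProb
  fun_prop

lemma jointProb_nonneg {π : (j : Fin N) → A j → ℝ} (hπ : π ∈ policySet A)
    (a : (j : Fin N) → A j) : 0 ≤ jointProb π a :=
  Finset.prod_nonneg fun j _ => (hπ j).1 (a j)

lemma sum_jointProb {π : (j : Fin N) → A j → ℝ} (hπ : π ∈ policySet A) :
    ∑ a, jointProb π a = 1 := by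
  unfold jointProb
  rw [← Fintype.prod_sum]
  exact Finset.prod_eq_one fun j _ => (hπ j).2

lemma jointProb_update (π : (j : Fin N) → A j → ℝ) (i : Fin N) (w : A i → ℝ)
    (a : (j : Fin N) → A j) :
    jointProb (Function.update π i w) a = w (a i) * ∏ j ∈ Finset.univ.erase i, π j (a j) := by
  unfold jointProb
  rw [← Finset.mul_prod_erase Finset.univ _ (Finset.mem_univ i)]
  congr 1
  · simp
  · refine Finset.prod_congr rfl fun j hj => ?_
    rw [Function.update_of_ne (Finset.ne_of_mem_erase hj)]

lemma jointProb_update_combo (π : (j : Fin N) → A j → ℝ) (i : Fin N) (u v : A i → ℝ)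
    (s t : ℝ) (a : (j : Fin N) → A j) :
    jointProb (Function.update π i (s • u + t • v)) a
      = s * jointProb (Function.update π i u) a + t * jointProb (Function.update π i v) a := by
  simp only [jointProb_update, Pi.add_apply, Pi.smul_apply, smul_eq_mul]
  ring

/-- The pairing of a probability vector with a payoff perturbation is jointly stable in both
arguments; only the first perturbation vector needs an a priori bound. -/
lemma abs_sum_sub_sum_le {ι : Type*} [Fintype ι] {p p' x x' : ι → ℝ} {M η : ℝ}
    (hp : ∀ a, 0 ≤ p' a) (hp1 : ∑ a, p' a = 1) (hx : ∀ a, |x a| ≤ M)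
    (hxx : ∀ a, |x a - x' a| ≤ η) :
    |∑ a, p a * x a - ∑ a, p' a * x' a| ≤ (∑ a, |p' a - p a|) * M + η := by
  calc |∑ a, p a * x a - ∑ a, p' a * x' a|
      = |∑ a, (p a * x a - p' a * x' a)| := by rw [Finset.sum_sub_distrib]
    _ ≤ ∑ a, |p a * x a - p' a * x' a| := Finset.abs_sum_le_sum_abs _ _
    _ ≤ ∑ a, (|p' a - p a| * M + p' a * η) := by
        refine Finset.sum_le_sum fun a _ => ?_
        have h : p a * x a - p' a * x' a = -(p' a - p a) * x a + p' a * (x a - x' a) := by ring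
        rw [h]
        refine (abs_add_le _ _).trans (add_le_add ?_ ?_)
        · rw [abs_mul, abs_neg]
          exact mul_le_mul_of_nonneg_left (hx a) (abs_nonneg _)
        · rw [abs_mul, abs_of_nonneg (hp a)]
          exact mul_le_mul_of_nonneg_left (hxx a) (hp a)
    _ = (∑ a, |p' a - p a|) * M + η := by
        rw [Finset.sum_add_distrib, ← Finset.sum_mul, ← Finset.sum_mul, hp1, one_mul]

variable {rstar : (i : Fin N) → ((j : Fin N) → A j) → ℝ}
  {R : (i : Fin N) → ((j : Fin N) → A j → ℝ) → Set (((j : Fin N) → A j) → ℝ)}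

/-- A lower bound on the robust payoffs makes the supremum defining `suppAt` finite. -/
lemma bddAbove_suppAt {i : Fin N} {π : (j : Fin N) → A j → ℝ}
    (hLB : ∃ L : ℝ, ∀ x ∈ R i π, L ≤ ∑ a, jointProb π a * (rstar i a + x a)) :
    BddAbove {t : ℝ | ∃ x ∈ R i π, t = -∑ a, jointProb π a * x a} := by
  obtain ⟨L, hL⟩ := hLB
  refine ⟨∑ a, jointProb π a * rstar i a - L, ?_⟩
  rintro t ⟨x, hx, rfl⟩
  have := hL x hx
  simp only [mul_add, Finset.sum_add_distrib] at this
  linarith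

/-- The robust value is the nominal expected payoff regularized by the support function. -/
lemma robustValue_eq {i : Fin N} {π : (j : Fin N) → A j → ℝ} (hne : (R i π).Nonempty)
    (hLB : ∃ L : ℝ, ∀ x ∈ R i π, L ≤ ∑ a, jointProb π a * (rstar i a + x a)) :
    robustValue rstar R i π = ∑ a, jointProb π a * rstar i a - suppAt R i π := by
  have hbdd := bddAbove_suppAt hLB
  obtain ⟨x₀, hx₀⟩ := hne
  have hlub : IsLUB {t : ℝ | ∃ x ∈ R i π, t = -∑ a, jointProb π a * x a} (suppAt R i π) :=
    isLUB_csSup ⟨_, x₀, hx₀, rfl⟩ hbdd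
  refine IsGLB.csInf_eq ⟨?_, ?_⟩ ⟨_, x₀, hx₀, rfl⟩
  · rintro t ⟨x, hx, rfl⟩
    have := hlub.1 ⟨x, hx, rfl⟩
    simp only [mul_add, Finset.sum_add_distrib]
    linarith
  · intro b hb
    have : suppAt R i π ≤ ∑ a, jointProb π a * rstar i a - b := by
      refine hlub.2 ?_
      rintro t ⟨x, hx, rfl⟩
      have := hb ⟨x, hx, rfl⟩
      simp only [mul_add, Finset.sum_add_distrib] at this
      linarith
    linarith

/-- One-sided comparison of two support values, when each point of the first uncertainty set has
a counterpart in the second with nearly the same pairing. -/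
lemma suppAt_le_add {i : Fin N} {π π' : (j : Fin N) → A j → ℝ} {c : ℝ}
    (hne : (R i π).Nonempty)
    (hbdd : BddAbove {t : ℝ | ∃ x ∈ R i π', t = -∑ a, jointProb π' a * x a})
    (h : ∀ x ∈ R i π, ∃ x' ∈ R i π',
      |∑ a, jointProb π a * x a - ∑ a, jointProb π' a * x' a| ≤ c) :
    suppAt R i π ≤ suppAt R i π' + c := by
  obtain ⟨x₀, hx₀⟩ := hne
  refine csSup_le ⟨_, x₀, hx₀, rfl⟩ ?_
  rintro t ⟨x, hx, rfl⟩
  obtain ⟨x', hx', hc⟩ := h x hx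
  have h1 : _ ≤ suppAt R i π' := le_csSup hbdd ⟨x', hx', rfl⟩
  have h2 := (abs_le.1 hc).1
  linarith

/-- Hausdorff continuity and boundedness of the uncertainty sets give continuity of the support
value at fully mixed policies. -/
lemma continuousWithinAt_suppAt_interior {i : Fin N} {π : (j : Fin N) → A j → ℝ}
    (hne : ∀ π ∈ policySet A, (R i π).Nonempty)
    (hbdd : ∀ π ∈ policySet A,
      BddAbove {t : ℝ | ∃ x ∈ R i π, t = -∑ a, jointProb π a * x a})
    (hbound : ∀ π ∈ policySet A, (∀ j b, 0 < π j b) →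
      ∃ M : ℝ, ∀ x ∈ R i π, ∀ a : ((j : Fin N) → A j), |x a| ≤ M)
    (hH : ∀ ε > (0 : ℝ), ∃ δ > (0 : ℝ), ∀ π' ∈ policySet A, dist π π' < δ →
      Metric.hausdorffDist (R i π) (R i π') < ε)
    (hπ : π ∈ policySet A) (hpos : ∀ j b, 0 < π j b) :
    ContinuousWithinAt (suppAt R i) (policySet A) π := by
  obtain ⟨M, hM⟩ := hbound π hπ hpos
  have hbd : ∀ π' ∈ policySet A, (∀ j b, 0 < π' j b) → Bornology.IsBounded (R i π') := by
    intro π' hπ' hp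
    obtain ⟨M', hM'⟩ := hbound π' hπ' hp
    refine isBounded_iff_forall_norm_le.2 ⟨max M' 0, fun x hx => ?_⟩
    exact (pi_norm_le_iff_of_nonneg (le_max_right _ _)).2 fun a =>
      (hM' x hx a).trans (le_max_left _ _)
  have hopen : IsOpen {π' : (j : Fin N) → A j → ℝ | ∀ j b, 0 < π' j b} := by
    simp only [Set.ofPred_forall]
    exact isOpen_iInter_of_finite fun j => isOpen_iInter_of_finite fun b =>
      isOpen_lt continuous_const ((continuous_apply b).comp (continuous_apply j))
  refine Metric.tendsto_nhds.2 fun ε hε => ?_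
  obtain ⟨δ, hδ, hHδ⟩ := hH (ε / 8) (by positivity)
  let K : ℝ := |M| + ε
  have hg : Continuous fun π' : (j : Fin N) → A j → ℝ =>
      (∑ a, |jointProb π' a - jointProb π a|) * K := by
    have := fun a => continuous_jointProb (A := A) a
    fun_prop
  have hg0 : ∀ᶠ π' in 𝓝 π, (∑ a, |jointProb π' a - jointProb π a|) * K < ε / 2 := by
    refine hg.continuousAt.eventually_lt continuousAt_const ?_
    simpa using hε
  filter_upwards [self_mem_nhdsWithin, nhdsWithin_le_nhds hg0,
    nhdsWithin_le_nhds (hopen.mem_nhds hpos),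
    nhdsWithin_le_nhds (Metric.ball_mem_nhds π hδ)] with π' hπ' hgπ' hpos' hball
  have hHd := hHδ π' hπ' (by rwa [dist_comm])
  -- Both sets are nonempty and bounded, so `hausdorffDist` is not the junk value of an
  -- infinite distance.
  have hfin : Metric.hausdorffEDist (R i π) (R i π') ≠ ⊤ :=
    Metric.hausdorffEDist_ne_top_of_nonempty_of_bounded (hne π hπ) (hne π' hπ')
      (hbd π hπ hpos) (hbd π' hπ' hpos')
  have hpair : ∀ x ∈ R i π, ∀ x' ∈ R i π', dist x x' < ε / 8 →
      |∑ a, jointProb π a * x a - ∑ a, jointProb π' a * x' a| ≤ ε / 2 + ε / 8 := by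
    intro x hx x' _ hd
    have h := abs_sum_sub_sum_le (p := jointProb π) (jointProb_nonneg hπ') (sum_jointProb hπ')
      (fun a => (hM x hx a).trans ((le_abs_self M).trans (le_add_of_nonneg_right hε.le)))
      (fun a => by
        rw [← Real.dist_eq]
        exact (dist_le_pi_dist x x' a).trans hd.le)
    exact h.trans (by gcongr)
  have h1 : suppAt R i π ≤ suppAt R i π' + (ε / 2 + ε / 8) := by
    refine suppAt_le_add (hne π hπ) (hbdd π' hπ') fun x hx => ?_
    obtain ⟨x', hx', hd⟩ := Metric.exists_dist_lt_of_hausdorffDist_lt hx hHd hfin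
    exact ⟨x', hx', hpair x hx x' hx' hd⟩
  have h2 : suppAt R i π' ≤ suppAt R i π + (ε / 2 + ε / 8) := by
    refine suppAt_le_add (hne π' hπ') (hbdd π hπ) fun x' hx' => ?_
    obtain ⟨x, hx, hd⟩ := Metric.exists_dist_lt_of_hausdorffDist_lt' hx' hHd hfin
    refine ⟨x, hx, ?_⟩
    rw [abs_sub_comm]
    exact hpair x hx x' hx' hd
  rw [Real.dist_eq, abs_lt]
  constructor <;> linarith

end Helpers

/-- Lemma (Kakutani conditions for the best-response correspondence): under
the assumptions of nonemptiness, closedness, convexity of the uncertainty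
sets, (i) a uniform payoff lower bound, (ii) convexity in `π_i` of the
support-function regularizer and its continuity at the boundary of `Π`, and
(iii) ℓ∞-Hausdorff continuity and boundedness of the uncertainty sets at
interior points of `Π`, the best-response correspondence `φ` is nonempty-
and convex-valued on `Π` and has closed graph. -/
theorem bestResponse_kakutani {N : ℕ} {A : Fin N → Type*} [∀ i, Fintype (A i)]
    (rstar : (i : Fin N) → ((j : Fin N) → A j) → ℝ)
    (R : (i : Fin N) → ((j : Fin N) → A j → ℝ) → Set (((j : Fin N) → A j) → ℝ))
    (hRne : ∀ (i : Fin N) (π : (j : Fin N) → A j → ℝ),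
      (∀ j, π j ∈ probSimplex (A j)) → (R i π).Nonempty)
    (hRcl : ∀ (i : Fin N) (π : (j : Fin N) → A j → ℝ),
      (∀ j, π j ∈ probSimplex (A j)) → IsClosed (R i π))
    (hRcv : ∀ (i : Fin N) (π : (j : Fin N) → A j → ℝ),
      (∀ j, π j ∈ probSimplex (A j)) → Convex ℝ (R i π))
    (hLB : ∃ L : ℝ, ∀ (i : Fin N) (π : (j : Fin N) → A j → ℝ),
      (∀ j, π j ∈ probSimplex (A j)) → ∀ x ∈ R i π,
        L ≤ ∑ a : ((j : Fin N) → A j), jointProb π a * (rstar i a + x a))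
    (hconv : ∀ (i : Fin N) (π : (j : Fin N) → A j → ℝ),
      (∀ j, π j ∈ probSimplex (A j)) →
      ∀ u ∈ probSimplex (A i), ∀ v ∈ probSimplex (A i), ∀ t ∈ Set.Icc (0:ℝ) 1,
        suppAt R i (Function.update π i (t • u + (1 - t) • v))
          ≤ t * suppAt R i (Function.update π i u)
            + (1 - t) * suppAt R i (Function.update π i v))
    (hbdry : ∀ (i : Fin N) (π : (j : Fin N) → A j → ℝ),
      (∀ j, π j ∈ probSimplex (A j)) → ¬ (∀ j b, 0 < π j b) →
      ∀ ε > (0:ℝ), ∃ δ > (0:ℝ), ∀ π' : (j : Fin N) → A j → ℝ,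
        (∀ j, π' j ∈ probSimplex (A j)) → dist π π' < δ →
          |suppAt R i π' - suppAt R i π| < ε)
    (hHcont : ∀ (i : Fin N) (π : (j : Fin N) → A j → ℝ),
      (∀ j, π j ∈ probSimplex (A j)) → (∀ j b, 0 < π j b) →
      ∀ ε > (0:ℝ), ∃ δ > (0:ℝ), ∀ π' : (j : Fin N) → A j → ℝ,
        (∀ j, π' j ∈ probSimplex (A j)) → dist π π' < δ →
          Metric.hausdorffDist (R i π) (R i π') < ε)
    (hbound : ∀ (i : Fin N) (π : (j : Fin N) → A j → ℝ),
      (∀ j, π j ∈ probSimplex (A j)) → (∀ j b, 0 < π j b) →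
      ∃ M : ℝ, ∀ x ∈ R i π, ∀ a : ((j : Fin N) → A j), |x a| ≤ M) :
    (∀ π : (j : Fin N) → A j → ℝ, (∀ j, π j ∈ probSimplex (A j)) →
      (bestResponse rstar R π).Nonempty ∧ Convex ℝ (bestResponse rstar R π)) ∧
    (∀ (πs zs : ℕ → (j : Fin N) → A j → ℝ) (π z : (j : Fin N) → A j → ℝ),
      (∀ n, ∀ j, πs n j ∈ probSimplex (A j)) →
      Filter.Tendsto πs Filter.atTop (nhds π) →
      Filter.Tendsto zs Filter.atTop (nhds z) →
      (∀ n, zs n ∈ bestResponse rstar R (πs n)) →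
      z ∈ bestResponse rstar R π) := by
  obtain ⟨L, hL⟩ := hLB
  have hLB' : ∀ i, ∀ π ∈ policySet A, ∃ L : ℝ, ∀ x ∈ R i π,
      L ≤ ∑ a, jointProb π a * (rstar i a + x a) := fun i π hπ => ⟨L, hL i π hπ⟩
  have hsupp : ∀ i, ContinuousOn (suppAt R i) (policySet A) := by
    intro i π hπ
    by_cases hpos : ∀ j b, 0 < π j b
    · exact continuousWithinAt_suppAt_interior (hRne i)
        (fun π hπ => bddAbove_suppAt (hLB' i π hπ)) (hbound i) (hHcont i π hπ hpos) hπ hpos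
    · refine Metric.continuousWithinAt_iff.2 fun ε hε => ?_
      obtain ⟨δ, hδ, h⟩ := hbdry i π hπ hpos ε hε
      refine ⟨δ, hδ, fun π' hπ' hd => ?_⟩
      rw [Real.dist_eq]
      exact h π' hπ' (by rwa [dist_comm])
  have hval : ∀ i, ∀ π ∈ policySet A, robustValue rstar R i π
      = ∑ a, jointProb π a * rstar i a - suppAt R i π :=
    fun i π hπ => robustValue_eq (hRne i π hπ) (hLB' i π hπ)
  have hF : ∀ i, ContinuousOn (robustValue rstar R i) (policySet A) := by
    intro i
    refine ContinuousOn.congr (ContinuousOn.sub ?_ (hsupp i)) (hval i)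
    exact (continuous_finsetSum _ fun a _ =>
      (continuous_jointProb a).mul continuous_const).continuousOn
  refine ⟨fun π hπ => ⟨?_, ?_⟩, ?_⟩
  · have hmax : ∀ i, ∃ u ∈ probSimplex (A i),
        IsMaxOn (fun u => robustValue rstar R i (Function.update π i u)) (probSimplex (A i)) u :=
      fun i => (isCompact_probSimplex (A i)).exists_isMaxOn ⟨π i, hπ i⟩
        ((hF i).comp (Continuous.update (f := fun _ => π) continuous_const i
          continuous_id).continuousOn
          fun u hu => update_mem_policySet hπ hu)
    choose z hz hzmax using hmax
    exact ⟨z, hz, fun i u hu => hzmax i hu⟩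
  · intro z hz w hw s t hs ht hst
    refine ⟨fun j => convex_probSimplex (A j) (hz.1 j) (hw.1 j) hs ht hst, fun i u hu => ?_⟩
    have hc := hconv i π hπ (z i) (hz.1 i) (w i) (hw.1 i) s ⟨hs, by linarith⟩
    obtain rfl : t = 1 - s := by linarith
    have hzu := hz.2 i u hu
    have hwu := hw.2 i u hu
    have hcombo : robustValue rstar R i (Function.update π i ((s • z + (1 - s) • w) i))
        ≥ s * robustValue rstar R i (Function.update π i (z i))
          + (1 - s) * robustValue rstar R i (Function.update π i (w i)) := by
      rw [Pi.add_apply, Pi.smul_apply, Pi.smul_apply,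
        hval i _ (update_mem_policySet hπ (hz.1 i)),
        hval i _ (update_mem_policySet hπ (hw.1 i)),
        hval i _ (update_mem_policySet hπ
          (convex_probSimplex (A i) (hz.1 i) (hw.1 i) hs ht hst))]
      simp only [jointProb_update_combo, add_mul,
        Finset.sum_add_distrib, mul_assoc, ← Finset.mul_sum]
      linarith
    have h1 := mul_le_mul_of_nonneg_left hzu hs
    have h2 := mul_le_mul_of_nonneg_left hwu ht
    linarith
  · intro πs zs π z hπs hπ hz hbr
    have hπm : π ∈ policySet A :=
      isClosed_policySet.mem_of_tendsto hπ (Filter.Eventually.of_forall hπs)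
    have hzm : z ∈ policySet A :=
      isClosed_policySet.mem_of_tendsto hz (Filter.Eventually.of_forall fun n => (hbr n).1)
    refine ⟨hzm, fun i u hu => ?_⟩
    have hlim : ∀ (us : ℕ → A i → ℝ) (u : A i → ℝ), (∀ n, us n ∈ probSimplex (A i)) →
        u ∈ probSimplex (A i) → Filter.Tendsto us Filter.atTop (nhds u) →
        Filter.Tendsto (fun n => robustValue rstar R i (Function.update (πs n) i (us n)))
          Filter.atTop (nhds (robustValue rstar R i (Function.update π i u))) := by
      intro us u hus hu hlim
      refine (hF i _ (update_mem_policySet hπm hu)).tendsto.comp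
        (tendsto_nhdsWithin_iff.2 ⟨hπ.update i hlim, Filter.Eventually.of_forall fun n =>
          update_mem_policySet (hπs n) (hus n)⟩)
    exact le_of_tendsto_of_tendsto' (hlim (fun _ => u) u (fun _ => hu) hu tendsto_const_nhds)
      (hlim (fun n => zs n i) (z i) (fun n => (hbr n).1 i) (hzm i)
        ((continuous_apply i).continuousAt.tendsto.comp hz))
      fun n => (hbr n).2 i u hu
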